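/- Let p be a prime, e | p−1, G_e the subgroup of 𝔽_p^* of order e, m ≥ 1 an integer, and suppose p ≥ (2m·⌊e^{1/(2m+1)}⌋ + 2m + 2)·e. Then for pairwise distinct ξ₁, …, ξ_m ∈ 𝔽_p^* and arbitrary μ₁, …, μ_m ∈ 𝔽_p^*, one has #(G_e ∩ (μ₁G_e + ξ₁) ∩ ⋯ ∩ (μ_m G_e + ξ_m)) ≤ C(m)·e^{(m+1)/(2m+1)} for some constant C(m) depending only on m. -/

import Mathlib

open Polynomial

namespace VS

noncomputable def Dl {K : Type*} [Field K] (R L : K[X]) : K[X] →ₗ[K] K[X] :=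
  (LinearMap.mulLeft K R) ∘ₗ Polynomial.derivative + LinearMap.mulLeft K L

variable {K : Type*} [Field K]

theorem Dl_apply (R L Q : K[X]) : Dl R L Q = R * derivative Q + L * Q := by
  simp [Dl]

theorem Dl_mul (R L E Q : K[X]) (h : R * derivative E = L * E) :
    Dl R 0 (E * Q) = E * Dl R L Q := by
  simp only [Dl_apply, derivative_mul]
  linear_combination Q * h

theorem Dl_pow_mul (R L E Q : K[X]) (h : R * derivative E = L * E) (k : ℕ) :
    ((Dl R 0) ^ k) (E * Q) = E * ((Dl R L) ^ k) Q := by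
  induction k with
  | zero => simp
  | succ k ih =>
    rw [pow_succ', pow_succ', Module.End.mul_apply, Module.End.mul_apply, ih, Dl_mul _ _ _ _ h]

theorem Dl_natDegree (R L Q : K[X]) (m d : ℕ) (hR : R.natDegree ≤ m + 1) (hL : L.natDegree ≤ m)
    (hQ : Q.natDegree ≤ d) : (Dl R L Q).natDegree ≤ d + m := by
  rw [Dl_apply]
  refine natDegree_add_le_of_degree_le ?_ ?_
  · rcases Nat.eq_zero_or_pos d with rfl | hd
    · have : derivative Q = 0 := derivative_of_natDegree_zero (by omega)
      simp [this]
    · have := natDegree_derivative_le Q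
      have h2 := natDegree_mul_le (p := R) (q := derivative Q)
      omega
  · have h2 := natDegree_mul_le (p := L) (q := Q)
    omega

theorem Dl_pow_natDegree (R L Q : K[X]) (m d : ℕ) (hR : R.natDegree ≤ m + 1)
    (hL : L.natDegree ≤ m) (hQ : Q.natDegree ≤ d) (k : ℕ) :
    (((Dl R L) ^ k) Q).natDegree ≤ d + m * k := by
  induction k with
  | zero => simpa
  | succ k ih =>
    rw [pow_succ', Module.End.mul_apply]
    have := Dl_natDegree R L _ m _ hR hL ih
    rw [mul_add, mul_one, ← add_assoc]; exact this

theorem Dl_pow_coeff (R Q : K[X]) (m d : ℕ) (hR : R.natDegree = m + 1) (hRm : R.Monic)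
    (hQ : Q.natDegree ≤ d) (k : ℕ) :
    (((Dl R 0) ^ k) Q).coeff (d + m * k) =
      (∏ i ∈ Finset.range k, ((d : K) + m * i)) * Q.coeff d := by
  induction k with
  | zero => simp
  | succ k ih =>
    rw [pow_succ', Module.End.mul_apply, Dl_apply, zero_mul, add_zero, Finset.prod_range_succ]
    have hd := Dl_pow_natDegree R 0 Q m d hR.le (by simp) hQ k
    set P := ((Dl R 0) ^ k) Q with hP
    rcases Nat.eq_zero_or_pos (d + m * k) with h0 | hpos
    · have : derivative P = 0 := derivative_of_natDegree_zero (by omega)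
      have h1 : (d : K) + m * k = 0 := by exact_mod_cast congrArg (Nat.cast : ℕ → K) h0
      rw [this, h1]; simp
    · have e1 : d + m * (k + 1) = (m + 1) + (d + m * k - 1) := by
        rw [mul_add]; omega
      rw [e1, coeff_mul_add_eq_of_natDegree_le hR.le
        ((natDegree_derivative_le P).trans (Nat.sub_le_sub_right hd 1)), coeff_derivative]
      have e2 : d + m * k - 1 + 1 = d + m * k := by omega
      have e3 : ((d + m * k - 1 : ℕ) : K) + 1 = d + m * k := by
        exact_mod_cast congrArg (Nat.cast : ℕ → K) e2
      have e4 : R.coeff (m + 1) = 1 := by rw [← hR]; exact hRm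
      rw [e2, e3, ih, e4]; ring

theorem vanish (p : ℕ) [Fact p.Prime] (R : (ZMod p)[X]) (x : ZMod p) (hx : R.eval x ≠ 0)
    (D : ℕ) (hD : D ≤ p) (P : (ZMod p)[X])
    (h : ∀ k < D, (((Dl R 0) ^ k) P).eval x = 0) : (X - C x) ^ D ∣ P := by
  induction D generalizing P with
  | zero => simp
  | succ D ih =>
    have h1 : (X - C x) ^ D ∣ Dl R 0 P := by
      refine ih (by omega) _ fun k hk => ?_
      have := h (k + 1) (by omega)
      rwa [pow_succ, Module.End.mul_apply] at this
    rw [Dl_apply, zero_mul, add_zero] at h1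
    have hcop : IsCoprime ((X - C x) ^ D) R := by
      refine IsCoprime.pow_left ?_
      rw [(irreducible_X_sub_C x).coprime_iff_not_dvd, dvd_iff_isRoot]
      exact hx
    have h2 : (X - C x) ^ D ∣ derivative P := hcop.dvd_of_dvd_mul_left h1
    have h0 : P.eval x = 0 := by simpa using h 0 (by omega)
    by_cases hP : P = 0
    · simp [hP]
    have h3 : (X - C x) ^ D ∣ P := ih (by omega) P fun k hk => h k (by omega)
    rcases Nat.eq_zero_or_pos D with rfl | hpos
    · simpa [dvd_iff_isRoot] using h0
    obtain ⟨g, hg⟩ := h3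
    have h4 : derivative P = (X - C x) ^ (D - 1) * (C (D : ZMod p) * g + (X - C x) * derivative g) := by
      obtain ⟨D, rfl⟩ := Nat.exists_eq_succ_of_ne_zero hpos.ne'
      rw [hg, derivative_mul, derivative_X_sub_C_pow]; simp; ring
    rw [h4] at h2
    have h5 : (X - C x) ∣ (C (D : ZMod p) * g + (X - C x) * derivative g) := by
      have : (X - C x) ^ D = (X - C x) ^ (D - 1) * (X - C x) := by
        rw [← pow_succ]; congr 1; omega
      rw [this] at h2
      exact (mul_dvd_mul_iff_left (pow_ne_zero _ (X_sub_C_ne_zero x))).1 h2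
    have h6 : (X - C x) ∣ C (D : ZMod p) * g := (dvd_add_left (dvd_mul_right _ _)).1 h5
    have hDne : (D : ZMod p) ≠ 0 := by
      rw [Ne, ZMod.natCast_eq_zero_iff]
      exact fun hh => by have := Nat.le_of_dvd hpos hh; omega
    have h7 : (X - C x) ∣ g := by
      rw [dvd_iff_isRoot] at h6 ⊢
      simpa [IsRoot, hDne] using h6
    rw [hg, pow_succ]
    exact mul_dvd_mul_left _ h7

/-- nonzero operators have few exponents -/
theorem exponents (p : ℕ) [Fact p.Prime] (R : (ZMod p)[X]) (m n : ℕ) (hR : R.natDegree = m + 1)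
    (hRm : R.Monic) (c : Fin n → (ZMod p)[X]) (hc : c ≠ 0) :
    ∃ Z : Finset ℕ, Z.card < n ∧ ∀ y : (ZMod p)[X], y.natDegree < p → y ≠ 0 →
      ∑ k, c k * ((Dl R 0) ^ (k : ℕ)) y = 0 → y.natDegree ∈ Z := by
  classical
  obtain ⟨k0, hk0⟩ := Function.ne_iff.1 hc
  have hk0 : c k0 ≠ 0 := hk0
  obtain ⟨k1, hk1, hmax⟩ := Finset.exists_max_image
    (Finset.univ.filter fun k => c k ≠ 0) (fun k => (c k).natDegree + m * (k : ℕ))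
    ⟨k0, by simpa using hk0⟩
  have hk1 : c k1 ≠ 0 := by simpa using hk1
  set M := (c k1).natDegree + m * (k1 : ℕ) with hM
  let a : Fin n → ZMod p := fun k => if m * (k : ℕ) ≤ M then (c k).coeff (M - m * k) else 0
  have ha1 : a k1 ≠ 0 := by
    have : m * (k1 : ℕ) ≤ M := by omega
    simp only [a, this, if_true]
    have : M - m * k1 = (c k1).natDegree := by omega
    rw [this]; simpa using hk1
  have hdeg : ∀ k, c k ≠ 0 → (c k).natDegree + m * (k : ℕ) ≤ M := fun k hk =>
    hmax k (by simpa using hk)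
  let h : ℕ → (ZMod p)[X] := fun k => ∏ i ∈ Finset.range k, (X + C ((m : ZMod p) * i))
  have hmon : ∀ k, (h k).Monic := fun k => monic_prod_of_monic _ _ fun i _ => monic_X_add_C _
  have hnd : ∀ k, (h k).natDegree = k := fun k => by
    rw [natDegree_prod_of_monic _ _ fun i _ => monic_X_add_C _]; simp only [natDegree_X_add_C]; simp
  let q : (ZMod p)[X] := ∑ k, C (a k) * h k
  have hq0 : q ≠ 0 := by
    obtain ⟨k2, hk2, hmax2⟩ := Finset.exists_max_image
      (Finset.univ.filter fun k => a k ≠ 0) (fun k => (k : ℕ)) ⟨k1, by simpa using ha1⟩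
    have hk2 : a k2 ≠ 0 := by simpa using hk2
    intro hq
    have h2 : q.coeff k2 = a k2 := by
      simp only [q, finsetSum_coeff, coeff_C_mul]
      rw [Finset.sum_eq_single k2]
      · have := hmon k2
        rw [Monic, leadingCoeff, hnd] at this
        rw [this, mul_one]
      · intro k _ hk
        by_cases hak : a k = 0
        · simp [hak]
        · have := hmax2 k (by simpa using hak)
          have h3 : (k : ℕ) < k2 := lt_of_le_of_ne this (fun h => hk (Fin.ext h))
          rw [coeff_eq_zero_of_natDegree_lt (by rw [hnd]; exact h3), mul_zero]
      · simp
    rw [hq, coeff_zero] at h2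
    exact hk2 h2.symm
  have hqd : q.natDegree < n := by
    have hn : 0 < n := k0.pos
    have : q.natDegree ≤ n - 1 := by
      refine natDegree_sum_le_of_forall_le _ _ fun k _ => ?_
      refine (natDegree_C_mul_le _ _).trans ?_
      rw [hnd]; omega
    omega
  refine ⟨(Finset.range p).filter fun z => q.eval (z : ZMod p) = 0, ?_, ?_⟩
  · refine lt_of_le_of_lt ?_ hqd
    refine le_trans ?_ (card_roots' q)
    refine le_trans ?_ (Multiset.toFinset_card_le _)
    refine Finset.card_le_card_of_injOn (fun z => (z : ZMod p)) ?_ ?_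
    · intro z hz
      simp only [Finset.coe_filter, Finset.mem_range, Set.mem_ofPred_eq] at hz
      simp [hq0, hz.2]
    · intro z hz w hw hzw
      simp only [Finset.coe_filter, Finset.mem_range, Set.mem_ofPred_eq] at hz hw
      have := (ZMod.natCast_eq_natCast_iff' _ _ _).1 hzw
      rwa [Nat.mod_eq_of_lt hz.1, Nat.mod_eq_of_lt hw.1] at this
  · intro y hyp hy0 hsum
    simp only [Finset.mem_filter, Finset.mem_range]
    refine ⟨hyp, ?_⟩
    have h1 := congrArg (fun f => coeff f (M + y.natDegree)) hsum
    simp only [finsetSum_coeff, coeff_zero] at h1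
    have h2 : ∀ k : Fin n, (c k * ((Dl R 0) ^ (k : ℕ)) y).coeff (M + y.natDegree)
        = a k * (h k).eval (y.natDegree : ZMod p) * y.leadingCoeff := by
      intro k
      by_cases hck : c k = 0
      · simp [hck, a]
      · have h3 := hdeg k hck
        have h4 : m * (k : ℕ) ≤ M := by omega
        have e : M + y.natDegree = (M - m * k) + (y.natDegree + m * k) := by omega
        rw [e, coeff_mul_add_eq_of_natDegree_le (by omega)
          (Dl_pow_natDegree R 0 y m _ hR.le (by simp) le_rfl k),
          Dl_pow_coeff R y m _ hR hRm le_rfl]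
        simp only [a, h4, if_true, h, eval_prod, eval_add, eval_X, eval_C, leadingCoeff]
        ring
    simp only [h2] at h1
    rw [← Finset.sum_mul] at h1
    have h5 := (mul_eq_zero.1 h1).resolve_right (by simpa using hy0)
    simp only [q, eval_finsetSum, eval_mul, eval_C]
    exact h5


theorem natDegree_det_le' {ι : Type*} [Fintype ι] [DecidableEq ι] (M : Matrix ι ι K[X]) (d : ℕ)
    (h : ∀ i j, (M i j).natDegree ≤ d) : M.det.natDegree ≤ Fintype.card ι * d := by
  rw [Matrix.det_apply]
  refine natDegree_sum_le_of_forall_le _ _ fun σ _ => ?_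
  refine (natDegree_smul_le _ _).trans ?_
  refine (natDegree_prod_le _ _).trans ?_
  refine (Finset.sum_le_card_nsmul _ _ d fun i _ => h _ _).trans ?_
  simp

/-- Wronskian-type lemma. -/
theorem dep (p : ℕ) [Fact p.Prime] (R : (ZMod p)[X]) (m n A t : ℕ) (hR : R.natDegree = m + 1)
    (hRm : R.Monic) (x : ZMod p) (hx : R.eval x = 0) (E Q L : Fin n → (ZMod p)[X])
    (hE : ∀ j, R * derivative (E j) = L j * E j) (hL : ∀ j, (L j).natDegree ≤ m)
    (hEx : ∀ j, (E j).eval x ≠ 0) (hQ : ∀ j, (Q j).natDegree ≤ A)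
    (hp : ∀ j, (E j * Q j).natDegree < p) (hdvd : (X - C x) ^ t ∣ ∑ j, E j * Q j)
    (hn : 0 < n) (hnt : n * (A + m * n) < t) :
    ∃ α : Fin n → ZMod p, α ≠ 0 ∧ ∑ j, C (α j) * (E j * Q j) = 0 := by
  classical
  let M : Matrix (Fin n) (Fin n) (ZMod p)[X] := fun k j => ((Dl R (L j)) ^ (k : ℕ)) (Q j)
  have hpow : ∀ (k : ℕ) (P : (ZMod p)[X]), (X - C x) ^ t ∣ P →
      (X - C x) ^ t ∣ ((Dl R 0) ^ k) P := by
    intro k P hP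
    induction k with
    | zero => simpa
    | succ k ih =>
      rw [pow_succ', Module.End.mul_apply, Dl_apply, zero_mul, add_zero]
      obtain ⟨g, hg⟩ := ih
      obtain ⟨r, hr⟩ := dvd_iff_isRoot.2 hx
      rw [hg, derivative_mul, derivative_X_sub_C_pow]
      rcases t with _ | t
      · simp
      · refine ⟨r * (C ((t + 1 : ℕ) : ZMod p) * g) + R * derivative g, ?_⟩
        rw [hr]; simp; ring
  have hME : ∀ k, (X - C x) ^ t ∣ (M.mulVec E) k := by
    intro k
    have h1 := hpow k _ hdvd
    rw [map_sum] at h1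
    convert h1 using 1
    simp only [Matrix.mulVec, dotProduct, M]
    refine Finset.sum_congr rfl fun j _ => ?_
    rw [Dl_pow_mul _ _ _ _ (hE j), mul_comm]
  have hdet : M.det = 0 := by
    by_contra hne
    have h1 : (X - C x) ^ t ∣ M.det * E ⟨0, hn⟩ := by
      have h2 : M.adjugate.mulVec (M.mulVec E) ⟨0, hn⟩ = M.det * E ⟨0, hn⟩ := by
        rw [Matrix.mulVec_mulVec, Matrix.adjugate_mul, Matrix.smul_mulVec]
        simp
      rw [← h2]
      simp only [Matrix.mulVec, dotProduct] at hME ⊢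
      exact Finset.dvd_sum fun k _ => Dvd.dvd.mul_left (hME k) _
    have hcop : IsCoprime ((X - C x) ^ t) (E ⟨0, hn⟩) := by
      refine IsCoprime.pow_left ?_
      rw [(irreducible_X_sub_C x).coprime_iff_not_dvd, dvd_iff_isRoot]
      exact hEx _
    have h3 := natDegree_le_of_dvd (hcop.dvd_of_dvd_mul_right h1) hne
    rw [natDegree_pow, natDegree_X_sub_C, mul_one] at h3
    have h4 := natDegree_det_le' M (A + m * n) (fun k j =>
      (Dl_pow_natDegree R (L j) (Q j) m A hR.le (hL j) (hQ j) k).trans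
        (by have := Nat.mul_le_mul_left m k.2.le; omega))
    rw [Fintype.card_fin] at h4
    omega
  obtain ⟨c, hc0, hc⟩ := Matrix.exists_vecMul_eq_zero_iff.2 hdet
  obtain ⟨Z, hZn, hZ⟩ := exponents p R m n hR hRm c hc0
  have hcF : ∀ j, ∑ k, c k * ((Dl R 0) ^ (k : ℕ)) (E j * Q j) = 0 := by
    intro j
    have h1 := congrFun hc j
    simp only [Matrix.vecMul, dotProduct, M, Pi.zero_apply] at h1
    simp only [Dl_pow_mul _ _ _ _ (hE j)]
    calc _ = E j * ∑ k, c k * ((Dl R (L j)) ^ (k : ℕ)) (Q j) := by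
          rw [Finset.mul_sum]; exact Finset.sum_congr rfl fun k _ => by ring
      _ = 0 := by rw [h1, mul_zero]
  let f : (Fin n → ZMod p) →ₗ[ZMod p] (Z → ZMod p) :=
    LinearMap.pi fun z => ∑ j, (E j * Q j).coeff z • LinearMap.proj j
  have hker : LinearMap.ker f ≠ ⊥ := LinearMap.ker_ne_bot_of_finrank_lt (by simpa using hZn)
  obtain ⟨α, hα, hα0⟩ := Submodule.exists_mem_ne_zero_of_ne_bot hker
  refine ⟨α, hα0, ?_⟩
  by_contra hy
  set y := ∑ j, C (α j) * (E j * Q j) with hyd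
  have h1 : y.natDegree ∈ Z := by
    refine hZ y ?_ hy ?_
    · have hp0 : 0 < p := (Fact.out : p.Prime).pos
      have : y.natDegree ≤ p - 1 := natDegree_sum_le_of_forall_le _ _ fun j _ =>
        (natDegree_C_mul_le _ _).trans (by have := hp j; omega)
      omega
    · have : ∀ k : Fin n, ((Dl R 0) ^ (k : ℕ)) y
          = ∑ j, C (α j) * ((Dl R 0) ^ (k : ℕ)) (E j * Q j) := by
        intro k
        simp only [hyd, map_sum, ← smul_eq_C_mul, map_smul]
      simp only [this, Finset.mul_sum]
      rw [Finset.sum_comm]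
      refine Finset.sum_eq_zero fun j _ => ?_
      calc _ = C (α j) * ∑ k, c k * ((Dl R 0) ^ (k : ℕ)) (E j * Q j) := by
            rw [Finset.mul_sum]; exact Finset.sum_congr rfl fun k _ => by ring
        _ = 0 := by rw [hcF, mul_zero]
  have h2 := congrFun (LinearMap.mem_ker.1 hα) ⟨_, h1⟩
  have h3 : y.coeff y.natDegree = 0 := by
    rw [← Pi.zero_apply (M := fun _ : Z => ZMod p) ⟨y.natDegree, h1⟩, ← h2]
    conv_lhs => rw [hyd]
    simp only [f, finsetSum_coeff, coeff_C_mul, LinearMap.pi_apply, LinearMap.sum_apply,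
      LinearMap.smul_apply, LinearMap.proj_apply, smul_eq_mul]
    exact Finset.sum_congr rfl fun j _ => mul_comm _ _
  exact hy (leadingCoeff_eq_zero.1 h3)

theorem exists_L {ι : Type*} [Fintype ι] [DecidableEq ι] (η : ι → K) (s : Finset ι) (b : ι → ℕ)
    (m : ℕ) (hm : Fintype.card ι = m + 1) :
    ∃ L : K[X], L.natDegree ≤ m ∧ (∏ i, (X - C (η i))) * derivative (∏ i ∈ s, (X - C (η i)) ^ b i)
      = L * ∏ i ∈ s, (X - C (η i)) ^ b i := by
  induction s using Finset.induction_on with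
  | empty => exact ⟨0, by simp, by simp⟩
  | insert j s hj ih =>
    obtain ⟨L, hL, h⟩ := ih
    refine ⟨L + C (b j : K) * ∏ i ∈ Finset.univ.erase j, (X - C (η i)), ?_, ?_⟩
    · refine natDegree_add_le_of_degree_le hL ((natDegree_C_mul_le _ _).trans ?_)
      rw [natDegree_prod_of_monic _ _ fun i _ => monic_X_sub_C _]
      simp only [natDegree_X_sub_C]
      simp [Finset.card_erase_of_mem, hm]
    · rw [Finset.prod_insert hj, derivative_mul, mul_add]
      have e1 : (∏ i, (X - C (η i))) * derivative ((X - C (η j)) ^ b j)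
          = C (b j : K) * (∏ i ∈ Finset.univ.erase j, (X - C (η i))) * (X - C (η j)) ^ b j := by
        rw [← Finset.mul_prod_erase Finset.univ _ (Finset.mem_univ j), derivative_X_sub_C_pow]
        rcases b j with _ | k
        · simp
        · simp; ring
      linear_combination (∏ i ∈ s, (X - C (η i)) ^ b i) * e1 + (X - C (η j)) ^ b j * h

theorem indep (p : ℕ) [Fact p.Prime] (m A B t : ℕ) (η : Fin (m + 1) → ZMod p)
    (hη : Function.Injective η) (hB : 0 < B) (hAt : B ^ m * (A + m * B ^ m) < t)
    (hp : A + (m + 1) * t * B < p) (s : Finset (Fin (m + 1)))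
    (I : Finset (Fin (m + 1) → Fin B))
    (hI : ∀ b ∈ I, ∀ b' ∈ I, (∀ i ∈ s, b i = b' i) → b = b')
    (Q : (Fin (m + 1) → Fin B) → (ZMod p)[X]) (hQ : ∀ b, (Q b).natDegree ≤ A)
    (hsum : ∑ b ∈ I, (∏ i ∈ s, (X - C (η i)) ^ (t * (b i : ℕ))) * Q b = 0) :
    ∀ b ∈ I, Q b = 0 := by
  classical
  induction s using Finset.induction_on generalizing I Q with
  | empty =>
    intro b hb
    have : I = {b} := by
      ext b'
      simp only [Finset.mem_singleton]
      exact ⟨fun h => hI _ h _ hb (by simp), fun h => h ▸ hb⟩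
    rw [this] at hsum
    simpa using hsum
  | insert j s hj ih =>
    by_contra hcon
    push Not at hcon
    obtain ⟨b0, hb0, hQb0⟩ := hcon
    obtain ⟨b1, hb1, hmin⟩ := Finset.exists_min_image (I.filter fun b => Q b ≠ 0)
      (fun b => (b j : ℕ)) ⟨b0, by simp [hb0, hQb0]⟩
    simp only [Finset.mem_filter] at hb1 hmin
    set β := (b1 j : ℕ) with hβ
    set J := I.filter fun b => Q b ≠ 0 ∧ (b j : ℕ) = β with hJ
    let E : (Fin (m + 1) → Fin B) → (ZMod p)[X] :=
      fun b => ∏ i ∈ s, (X - C (η i)) ^ (t * (b i : ℕ))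
    have hJinj : ∀ b ∈ J, ∀ b' ∈ J, (∀ i ∈ s, b i = b' i) → b = b' := by
      intro b hb b' hb' h
      simp only [hJ, Finset.mem_filter] at hb hb'
      refine hI b hb.1 b' hb'.1 fun i hi => ?_
      rcases Finset.mem_insert.1 hi with rfl | hi
      · exact Fin.ext (hb.2.2.trans hb'.2.2.symm)
      · exact h i hi
    have hdvd : (X - C (η j)) ^ t ∣ ∑ b ∈ J, E b * Q b := by
      have h1 : ∑ b ∈ I, (∏ i ∈ insert j s, (X - C (η i)) ^ (t * (b i : ℕ))) * Q b
          = (X - C (η j)) ^ (t * β) * ∑ b ∈ I, (X - C (η j)) ^ (t * ((b j : ℕ) - β)) * (E b * Q b) := by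
        rw [Finset.mul_sum]
        refine Finset.sum_congr rfl fun b hb => ?_
        by_cases hQ0 : Q b = 0
        · simp [hQ0]
        · have h2 : β ≤ (b j : ℕ) := hmin b ⟨hb, hQ0⟩
          have h3 : t * (b j : ℕ) = t * β + t * ((b j : ℕ) - β) := by
            rw [← mul_add]; congr 1; omega
          rw [Finset.prod_insert hj, h3, pow_add]
          simp only [E]; ring
      rw [h1] at hsum
      have h2 := (mul_eq_zero.1 hsum).resolve_left (pow_ne_zero _ (X_sub_C_ne_zero _))
      rw [← Finset.sum_filter_add_sum_filter_not I (fun b => Q b ≠ 0 ∧ (b j : ℕ) = β)] at h2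
      have h3 : ∑ b ∈ I.filter (fun b => Q b ≠ 0 ∧ (b j : ℕ) = β),
          (X - C (η j)) ^ (t * ((b j : ℕ) - β)) * (E b * Q b) = ∑ b ∈ J, E b * Q b := by
        refine Finset.sum_congr rfl fun b hb => ?_
        rw [Finset.mem_filter] at hb
        rw [hb.2.2]; simp
      rw [h3] at h2
      rw [eq_neg_of_add_eq_zero_left h2, dvd_neg]
      refine Finset.dvd_sum fun b hb => ?_
      rw [Finset.mem_filter] at hb
      by_cases hQ0 : Q b = 0
      · simp [hQ0]
      · have h2 : β ≤ (b j : ℕ) := hmin b ⟨hb.1, hQ0⟩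
        have h4 : (b j : ℕ) ≠ β := fun h => hb.2 ⟨hQ0, h⟩
        refine Dvd.dvd.mul_right (pow_dvd_pow _ ?_) _
        exact Nat.le_mul_of_pos_right _ (by omega)
    have hJpos : 0 < J.card := Finset.card_pos.2 ⟨b1, by simp [hJ, hb1, hβ]⟩
    have hscard : s.card ≤ m := by
      have h1 := Finset.card_le_univ (insert j s)
      rw [Finset.card_insert_of_notMem hj, Fintype.card_fin] at h1
      omega
    have hJcard : J.card ≤ B ^ m := by
      have h1 : J.card ≤ (Finset.univ : Finset (s → Fin B)).card := by
        refine Finset.card_le_card_of_injOn (fun b i => b i) (fun _ _ => by simp) ?_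
        intro b hb b' hb' h
        exact hJinj b hb b' hb' fun i hi => congrFun h ⟨i, hi⟩
      rw [Finset.card_univ, Fintype.card_fun, Fintype.card_fin, Fintype.card_coe] at h1
      exact h1.trans (Nat.pow_le_pow_right hB hscard)
    let φ := J.equivFin.symm
    choose Lf hL1 hL2 using fun b : Fin (m + 1) → Fin B =>
      exists_L η s (fun i => t * (b i : ℕ)) m (by simp)
    have hsumφ : ∀ f : (Fin (m + 1) → Fin B) → (ZMod p)[X],
        ∑ k, f (φ k) = ∑ b ∈ J, f b := by
      intro f
      rw [Equiv.sum_comp φ (fun b : J => f b)]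
      exact Finset.sum_coe_sort J f
    obtain ⟨α, hα0, hα⟩ := dep p (∏ i, (X - C (η i))) m J.card A t
      (by rw [natDegree_prod_of_monic _ _ fun i _ => monic_X_sub_C _]
          simp only [natDegree_X_sub_C]; simp)
      (monic_prod_of_monic _ _ fun i _ => monic_X_sub_C _) (η j)
      (by rw [eval_prod]; exact Finset.prod_eq_zero (Finset.mem_univ j) (by simp))
      (fun k => E (φ k)) (fun k => Q (φ k)) (fun k => Lf (φ k))
      (fun k => hL2 _) (fun k => hL1 _)
      (fun k => by
        simp only [E, eval_prod]
        refine Finset.prod_ne_zero_iff.2 fun i hi => ?_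
        simp only [eval_pow, eval_sub, eval_X, eval_C]
        refine pow_ne_zero _ (sub_ne_zero.2 fun h => ?_)
        exact hj (hη h ▸ hi))
      (fun k => hQ _)
      (fun k => by
        refine lt_of_le_of_lt natDegree_mul_le ?_
        have h1 : (E (φ k)).natDegree ≤ s.card * (t * B) := by
          refine (natDegree_prod_le _ _).trans ?_
          refine Finset.sum_le_card_nsmul _ _ _ fun i _ => ?_
          rw [natDegree_pow, natDegree_X_sub_C, mul_one]
          exact Nat.mul_le_mul_left _ (Fin.is_lt _).le
        have h2 : s.card * (t * B) ≤ (m + 1) * (t * B) := Nat.mul_le_mul_right _ (by omega)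
        have h3 := hQ (φ k)
        rw [mul_assoc] at hp
        omega)
      (by rw [hsumφ fun b => E b * Q b]; exact hdvd)
      hJpos
      (lt_of_le_of_lt (Nat.mul_le_mul hJcard
        (Nat.add_le_add_left (Nat.mul_le_mul_left _ hJcard) _)) hAt)
    obtain ⟨k0, hk0⟩ := Function.ne_iff.1 hα0
    have hk0 : α k0 ≠ 0 := hk0
    let α' : (Fin (m + 1) → Fin B) → ZMod p := fun b =>
      if hb : b ∈ J then α (φ.symm ⟨b, hb⟩) else 0
    have hα' : ∀ k, α' (φ k) = α k := by
      intro k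
      have : ((φ k : J) : Fin (m + 1) → Fin B) ∈ J := (φ k).2
      simp only [α', this, dif_pos]
      simp
    have h1 := ih J hJinj (fun b => C (α' b) * Q b)
      (fun b => (natDegree_C_mul_le _ _).trans (hQ b))
      (by
        rw [← hsumφ fun b => (∏ i ∈ s, (X - C (η i)) ^ (t * (b i : ℕ))) * (C (α' b) * Q b), ← hα]
        refine Finset.sum_congr rfl fun k _ => ?_
        rw [hα']; simp only [E]; ring)
      (φ k0) (φ k0).2
    simp only [hα'] at h1
    have h2 := (Finset.mem_filter.1 (φ k0).2).2.1
    rcases mul_eq_zero.1 h1 with h | h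
    · exact hk0 (by simpa using h)
    · exact h2 h


theorem stepanov (p : ℕ) [Fact p.Prime] (m A B t : ℕ) (η : Fin (m + 1) → ZMod p)
    (hη : Function.Injective η) (hB : 0 < B) (hA0 : 0 < A) (hA : (m + 1) * A < B ^ (m + 1))
    (hAt : B ^ m * (A + m * B ^ m) < t)
    (hp : A + (m + 1) * t * B < p) (c : Fin (m + 1) → ZMod p) (S : Finset (ZMod p))
    (hS : ∀ x ∈ S, ∀ i, x ≠ η i ∧ (x - η i) ^ t = c i) :
    S.card * A ≤ A + (m + 1) * t * B := by
  classical
  set R : (ZMod p)[X] := ∏ i, (X - C (η i)) with hRdef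
  have hR : R.natDegree = m + 1 := by
    rw [hRdef, natDegree_prod_of_monic _ _ fun i _ => monic_X_sub_C _]
    simp only [natDegree_X_sub_C]; simp
  let E : (Fin (m + 1) → Fin B) → (ZMod p)[X] :=
    fun b => ∏ i, (X - C (η i)) ^ (t * (b i : ℕ))
  let cb : (Fin (m + 1) → Fin B) → ZMod p := fun b => ∏ i, c i ^ (b i : ℕ)
  choose L hL1 hL2 using fun b : Fin (m + 1) → Fin B =>
    exists_L η Finset.univ (fun i => t * (b i : ℕ)) m (by simp)
  let q : (Fin (m + 1) → Fin B) → ((Fin (m + 1) → Fin B) × Fin A → ZMod p) →ₗ[ZMod p] (ZMod p)[X] :=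
    fun b => ∑ a : Fin A, (monomial (a : ℕ)) ∘ₗ LinearMap.proj (b, a)
  have hqd : ∀ b f, (q b f).natDegree ≤ A - 1 := by
    intro b f
    simp only [q, LinearMap.sum_apply, LinearMap.comp_apply]
    refine natDegree_sum_le_of_forall_le _ _ fun a _ => ?_
    exact (natDegree_monomial_le _).trans (by omega)
  let T : ℕ → ((Fin (m + 1) → Fin B) × Fin A → ZMod p) →ₗ[ZMod p] (ZMod p)[X] :=
    fun k => ∑ b, cb b • (((Dl R (L b)) ^ k) ∘ₗ q b)
  let Φ : ((Fin (m + 1) → Fin B) × Fin A → ZMod p) →ₗ[ZMod p]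
      (Fin A × Fin ((m + 1) * A) → ZMod p) :=
    LinearMap.pi fun kd => (lcoeff (ZMod p) (kd.2 : ℕ)) ∘ₗ T kd.1
  have hker : LinearMap.ker Φ ≠ ⊥ := by
    refine LinearMap.ker_ne_bot_of_finrank_lt ?_
    simp only [Module.finrank_fintype_fun_eq_card, Fintype.card_prod, Fintype.card_fun,
      Fintype.card_fin]
    rw [mul_comm (B ^ (m + 1))]
    exact Nat.mul_lt_mul_of_pos_left hA hA0
  obtain ⟨f, hf, hf0⟩ := Submodule.exists_mem_ne_zero_of_ne_bot hker
  have hT : ∀ k < A, T k f = 0 := by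
    intro k hk
    ext d
    rw [coeff_zero]
    by_cases hd : d < (m + 1) * A
    · have := congrFun (LinearMap.mem_ker.1 hf) (⟨k, hk⟩, ⟨d, hd⟩)
      simpa [Φ] using this
    · refine coeff_eq_zero_of_natDegree_lt (lt_of_le_of_lt (b := A - 1 + m * k) ?_
        (lt_of_lt_of_le ?_ (not_lt.1 hd)))
      · simp only [T, LinearMap.sum_apply, LinearMap.smul_apply, LinearMap.comp_apply]
        refine natDegree_sum_le_of_forall_le _ _ fun b _ => (natDegree_smul_le _ _).trans ?_
        exact Dl_pow_natDegree R (L b) _ m _ hR.le (hL1 b) (hqd b f) k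
      · have := Nat.mul_le_mul_left m hk.le
        rw [add_mul]; omega
  set P : (ZMod p)[X] := ∑ b, E b * q b f with hP
  have hP0 : P ≠ 0 := by
    intro h0
    have h1 := indep p m A B t η hη hB hAt hp Finset.univ Finset.univ
      (fun b _ b' _ h => funext fun i => h i (Finset.mem_univ i)) (fun b => q b f)
      (fun b => (hqd b f).trans (Nat.sub_le _ _)) h0
    refine hf0 (funext fun ⟨b, a⟩ => ?_)
    have h2 := congrArg (fun g => coeff g (a : ℕ)) (h1 b (Finset.mem_univ b))
    simp only [q, LinearMap.sum_apply, LinearMap.comp_apply, finsetSum_coeff, coeff_monomial,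
      coeff_zero, LinearMap.proj_apply] at h2
    rw [Finset.sum_eq_single a (fun a' _ h => if_neg fun h' => h (Fin.ext h')) (by simp)] at h2
    simpa using h2
  have hAp : A ≤ p := by omega
  have hdvd : ∀ x ∈ S, (X - C x) ^ A ∣ P := by
    intro x hx
    refine vanish p R x ?_ A hAp P fun k hk => ?_
    · rw [hRdef, eval_prod]
      refine Finset.prod_ne_zero_iff.2 fun i _ => ?_
      simpa [sub_eq_zero] using (hS x hx i).1
    · have h1 := congrArg (eval x) (hT k hk)
      simp only [T, LinearMap.sum_apply, LinearMap.smul_apply, LinearMap.comp_apply,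
        eval_finsetSum, eval_smul, eval_zero] at h1
      rw [hP, map_sum, eval_finsetSum, ← h1]
      refine Finset.sum_congr rfl fun b _ => ?_
      rw [Dl_pow_mul R (L b) (E b) _ (hL2 b), eval_mul, smul_eq_mul]
      congr 1
      simp only [E, cb, eval_prod]
      refine Finset.prod_congr rfl fun i _ => ?_
      rw [eval_pow, eval_sub, eval_X, eval_C, pow_mul, (hS x hx i).2]
  have hprod : ∏ x ∈ S, (X - C x) ^ A ∣ P := by
    refine Finset.prod_dvd_of_coprime ?_ hdvd
    intro x _ y _ hxy
    exact IsCoprime.pow (pairwise_coprime_X_sub_C (s := id) Function.injective_id hxy)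
  have h1 := natDegree_le_of_dvd hprod hP0
  rw [natDegree_prod_of_monic _ _ fun i _ => (monic_X_sub_C _).pow _] at h1
  simp only [natDegree_pow, natDegree_X_sub_C, mul_one, Finset.sum_const, smul_eq_mul] at h1
  refine h1.trans ?_
  refine natDegree_sum_le_of_forall_le _ _ fun b _ => natDegree_mul_le.trans ?_
  have h2 : (E b).natDegree ≤ (m + 1) * (t * B) := by
    refine (natDegree_prod_le _ _).trans ?_
    refine (Finset.sum_le_card_nsmul _ _ (t * B) fun i _ => ?_).trans (by simp)
    rw [natDegree_pow, natDegree_X_sub_C, mul_one]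
    exact Nat.mul_le_mul_left _ (Fin.is_lt _).le
  have h3 := hqd b f
  rw [mul_assoc]
  omega

end VS


/-- Vyugin–Shkredov bound for intersections of `G_e` with `m` shifted multiplicative
cosets `μᵢ G_e + ξᵢ`. -/
theorem stmt_15 (m : ℕ) (hm : 1 ≤ m) :
    ∃ C : ℝ, 0 < C ∧ ∀ (p : ℕ), p.Prime → ∀ e : ℕ, e ∣ p - 1 →
      (2 * m * ⌊(e : ℝ) ^ ((1 : ℝ) / (2 * m + 1))⌋₊ + 2 * m + 2) * e ≤ p →
      ∀ (ξ μ : Fin m → ZMod p), Function.Injective ξ →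
        (∀ i, ξ i ≠ 0) → (∀ i, μ i ≠ 0) →
        ({x : ZMod p | x ^ e = 1 ∧
          ∀ i, ∃ l : ZMod p, l ^ e = 1 ∧ x = μ i * l + ξ i}).ncard ≤
            C * (e : ℝ) ^ (((m : ℝ) + 1) / (2 * (m : ℝ) + 1)) := by
  classical
  set K : ℕ := 2 * (m + 1) ^ 2 with hK
  set W : ℕ := (2 * (m + 1)) ^ m * (2 * (m + 1) * (m + 2)) with hW
  have hKpos : 0 < K := by positivity
  refine ⟨(K : ℝ) ^ m + W, by positivity, ?_⟩
  intro p hpp e hep hpe ξ μ hξ hξ0 hμ0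
  have : Fact p.Prime := ⟨hpp⟩
  have he : 0 < e := by
    rcases Nat.eq_zero_or_pos e with rfl | h
    · have := Nat.eq_zero_of_zero_dvd hep
      have := hpp.two_le
      omega
    · exact h
  set τ : ℝ := (e : ℝ) ^ ((1 : ℝ) / (2 * m + 1)) with hτ
  have he0 : (0 : ℝ) ≤ e := Nat.cast_nonneg e
  have hτ0 : 0 < τ := Real.rpow_pos_of_pos (by exact_mod_cast he) _
  have hm1 : (2 * (m : ℝ) + 1) ≠ 0 := by positivity
  have hτe : τ ^ (2 * m + 1) = e := by
    rw [hτ, ← Real.rpow_natCast, ← Real.rpow_mul he0]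
    push_cast
    rw [one_div_mul_cancel hm1, Real.rpow_one]
  have hτm : (e : ℝ) ^ (((m : ℝ) + 1) / (2 * (m : ℝ) + 1)) = τ ^ (m + 1) := by
    rw [hτ, ← Real.rpow_natCast, ← Real.rpow_mul he0]
    congr 1
    push_cast
    ring
  rw [hτm]
  set s : ℕ := ⌊τ⌋₊ with hs
  have hsτ : (s : ℝ) ≤ τ := Nat.floor_le hτ0.le
  have hτs : τ < s + 1 := Nat.lt_floor_add_one τ
  have hse : s ^ (2 * m + 1) ≤ e := by
    have : (s : ℝ) ^ (2 * m + 1) ≤ e := by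
      rw [← hτe]; exact pow_le_pow_left₀ (Nat.cast_nonneg s) hsτ _
    exact_mod_cast this
  set S0 : Set (ZMod p) := {x : ZMod p | x ^ e = 1 ∧
          ∀ i, ∃ l : ZMod p, l ^ e = 1 ∧ x = μ i * l + ξ i} with hS0
  have hfin : S0.Finite := Set.toFinite _
  set S : Finset (ZMod p) := hfin.toFinset with hSdef
  have hcard : S0.ncard = S.card := Set.ncard_eq_toFinset_card S0 hfin
  have hmemS : ∀ x ∈ S, x ^ e = 1 ∧
          ∀ i, ∃ l : ZMod p, l ^ e = 1 ∧ x = μ i * l + ξ i := by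
    intro x hx
    exact hfin.mem_toFinset.1 hx
  rw [hcard]
  have hSe : S.card ≤ e := by
    have h1 : S ⊆ (nthRoots e (1 : ZMod p)).toFinset := by
      intro x hx
      rw [Multiset.mem_toFinset, mem_nthRoots he]
      exact (hmemS x hx).1
    exact (Finset.card_le_card h1).trans ((Multiset.toFinset_card_le _).trans (card_nthRoots _ _))
  have hτm0 : 0 < τ ^ m := pow_pos hτ0 m
  set u : ℕ := s / K with hu
  rcases Nat.eq_zero_or_pos u with hu0 | hupos
  · have hsK : s < K := by
      rcases Nat.div_eq_zero_iff.1 hu0 with h | h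
      · omega
      · exact h
    have hτK : τ ≤ K := by
      have : (s : ℝ) + 1 ≤ K := by exact_mod_cast hsK
      linarith
    calc (S.card : ℝ) ≤ e := by exact_mod_cast hSe
      _ = τ ^ m * τ ^ (m + 1) := by rw [← hτe, ← pow_add]; congr 1; ring
      _ ≤ ((K : ℝ) ^ m + W) * τ ^ (m + 1) := by
        refine mul_le_mul_of_nonneg_right ?_ (by positivity)
        have := pow_le_pow_left₀ hτ0.le hτK m
        have hW0 : (0 : ℝ) ≤ W := Nat.cast_nonneg _
        linarith
  · set B : ℕ := 2 * (m + 1) * u with hB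
    set A : ℕ := B ^ m * u with hA
    have hBpos : 0 < B := by positivity
    have hApos : 0 < A := by positivity
    have hBs : (m + 1) * B ≤ s := by
      calc (m + 1) * B = u * K := by rw [hB, hK]; ring
        _ ≤ s := Nat.div_mul_le_self s K
    have huB : u ≤ B := by rw [hB]; exact Nat.le_mul_of_pos_left _ (by positivity)
    have hAB : (m + 1) * A < B ^ (m + 1) := by
      have h1 : B ^ (m + 1) = 2 * ((m + 1) * A) := by
        rw [pow_succ, hA]
        conv_lhs => rw [show B ^ m * B = B ^ m * (2 * (m + 1) * u) from rfl]
        ring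
      have : 0 < (m + 1) * A := by positivity
      omega
    have hAt : B ^ m * (A + m * B ^ m) < e := by
      calc B ^ m * (A + m * B ^ m) ≤ B ^ m * (B ^ m * B + m * (B ^ m * B)) := by
            refine Nat.mul_le_mul_left _ (Nat.add_le_add (Nat.mul_le_mul_left _ huB) ?_)
            exact Nat.mul_le_mul_left _ (Nat.le_mul_of_pos_right _ hBpos)
        _ = (m + 1) * B ^ (2 * m + 1) := by ring
        _ < (m + 1) ^ (2 * m + 1) * B ^ (2 * m + 1) := by
            refine Nat.mul_lt_mul_of_pos_right ?_ (by positivity)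
            calc m + 1 = (m + 1) ^ 1 := by ring
              _ < (m + 1) ^ (2 * m + 1) := Nat.pow_lt_pow_right (by omega) (by omega)
        _ = ((m + 1) * B) ^ (2 * m + 1) := (mul_pow _ _ _).symm
        _ ≤ s ^ (2 * m + 1) := Nat.pow_le_pow_left hBs _
        _ ≤ e := hse
    have hAe : A < e := by
      refine lt_of_le_of_lt ?_ hAt
      calc A ≤ A + m * B ^ m := Nat.le_add_right _ _
        _ ≤ _ := Nat.le_mul_of_pos_left _ (by positivity)
    have hp2 : A + (m + 1) * e * B < p := by
      have h1 : (m + 1) * e * B ≤ s * e := by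
        calc (m + 1) * e * B = ((m + 1) * B) * e := by ring
          _ ≤ s * e := Nat.mul_le_mul_right _ hBs
      have h2 : s * e + e ≤ (2 * m * s + 2 * m + 2) * e := by
        calc s * e + e = (s + 1) * e := by ring
          _ ≤ _ := by
            refine Nat.mul_le_mul_right _ ?_
            have : s ≤ 2 * m * s := Nat.le_mul_of_pos_left _ (by omega)
            omega
      omega
    have hst := VS.stepanov p m A B e (Fin.cons 0 ξ)
      (Fin.cons_injective_iff.2 ⟨by rintro ⟨i, hi⟩; exact hξ0 i hi, hξ⟩)
      hBpos hApos hAB hAt hp2 (Fin.cons 1 fun i => μ i ^ e) S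
      (by
        intro x hx i
        obtain ⟨h1, h2⟩ := hmemS x hx
        refine Fin.cases ?_ (fun i => ?_) i
        · simp only [Fin.cons_zero, sub_zero]
          refine ⟨?_, h1⟩
          rintro rfl
          rw [zero_pow he.ne'] at h1
          exact zero_ne_one h1
        · simp only [Fin.cons_succ]
          obtain ⟨l, hl, hxl⟩ := h2 i
          refine ⟨?_, ?_⟩
          · intro h
            rw [h] at hxl
            have h3 : μ i * l = 0 := by linear_combination -hxl
            rcases mul_eq_zero.1 h3 with h4 | h4
            · exact hμ0 i h4
            · rw [h4, zero_pow he.ne'] at hl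
              exact zero_ne_one hl
          · rw [hxl, add_sub_cancel_right, mul_pow, hl, mul_one])
    have hSB : S.card * B ^ m ≤ 2 * (m + 1) * (m + 2) * e := by
      refine Nat.le_of_mul_le_mul_right ?_ hupos
      calc S.card * B ^ m * u = S.card * A := by rw [hA]; ring
        _ ≤ A + (m + 1) * e * B := hst
        _ ≤ e * B + (m + 1) * e * B :=
          Nat.add_le_add_right (hAe.le.trans (Nat.le_mul_of_pos_right _ hBpos)) _
        _ = 2 * (m + 1) * (m + 2) * e * u := by rw [hB]; ring
    have hτB : τ ≤ (2 * (m + 1) * B : ℕ) := by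
      have h1 : s + 1 ≤ 2 * (m + 1) * B := by
        have h2 : s < K * (u + 1) := by
          have := Nat.lt_mul_div_succ s hKpos
          exact this
        have h3 : 2 * (m + 1) * B = K * (2 * u) := by rw [hB, hK]; ring
        have h4 : K * (u + 1) ≤ K * (2 * u) := Nat.mul_le_mul_left _ (by omega)
        omega
      have h2 : (s : ℝ) + 1 ≤ (2 * (m + 1) * B : ℕ) := by exact_mod_cast h1
      linarith
    have hfinal : (S.card : ℝ) * τ ^ m ≤ (W * τ ^ (m + 1)) * τ ^ m := by
      calc (S.card : ℝ) * τ ^ m ≤ S.card * ((2 * (m + 1) * B : ℕ) : ℝ) ^ m := by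
            refine mul_le_mul_of_nonneg_left (pow_le_pow_left₀ hτ0.le hτB m) (Nat.cast_nonneg _)
        _ = ((2 * (m + 1)) ^ m * (S.card * B ^ m) : ℕ) := by
            push_cast; rw [mul_pow (2 * ((m : ℝ) + 1))]; ring
        _ ≤ ((2 * (m + 1)) ^ m * (2 * (m + 1) * (m + 2) * e) : ℕ) := by
            exact_mod_cast Nat.mul_le_mul_left _ hSB
        _ = (W * e : ℕ) := by rw [hW]; congr 1; ring
        _ = (W * τ ^ (m + 1)) * τ ^ m := by
            rw [Nat.cast_mul, ← hτe]; ring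
    have h5 := le_of_mul_le_mul_right hfinal hτm0
    refine h5.trans (mul_le_mul_of_nonneg_right ?_ (by positivity))
    have : (0 : ℝ) ≤ (K : ℝ) ^ m := by positivity
    linarith
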